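/- For n ≥ 2, the pure virtual triplet group PVL_n has a presentation with generating set {κ_{i,j} : 1 ≤ i < j ≤ n} and defining relations κ_{i,j} κ_{i,k} κ_{j,k} = κ_{j,k} κ_{i,k} κ_{i,j} for all 1 ≤ i < j < k ≤ n; that is, the homomorphism from the group presented by generators x_{i,j} (1 ≤ i < j ≤ n) and relations x_{i,j} x_{i,k} x_{j,k} = x_{j,k} x_{i,k} x_{i,j} (1 ≤ i < j < k ≤ n) to VL_n sending x_{i,j} to κ_{i,j} is injective with image PVL_n. -/

import Mathlib

/-!
Write `P` for the group presented by the `x_{i,j}`, put `x_{j,i} = x_{i,j}⁻¹`, and let `S_n` act on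
the indices. The relations are stable under this action: permuting `(i, j, k)` in
`x_{i,j} x_{i,k} x_{j,k} = x_{j,k} x_{i,k} x_{i,j}` gives an equivalent relation (`X_rel`). Hence
`P ⋊ S_n` makes sense, and the theorem says that `VL n ≃ P ⋊ S_n` through `ρ_i ↦ s_i`,
`y_i ↦ x_{i,i+1} s_i`.

* Conjugation by `ρ_s` sends `κ_{i,j}` to `κ_{s(i),s(j)}`, where `s(i)` is the image of `i` under
  the transposition `(s, s+1)` (`cj_kappa`). The braid relation between `y_i` and `y_{i+1}` is the
  defining relation for `(i, i+1, i+2)`, and conjugating it produces the one for every `i < j < k`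
  (`kappa_rel`). So there is a homomorphism `φ : P → VL n`, `x_{i,j} ↦ κ_{i,j}`.
* The assignment above respects the relations of `VL n` (`sdGen_rels`), which gives
  `ψ : VL n → P ⋊ S_n`. Since `ψ ∘ φ` is the inclusion of `P` (`psi_phi`), `φ` is injective; since
  `π` is `ψ` followed by the projection to `S_n`, the image of `φ` lies in `ker π`.
* As `y_i = κ_{i,i+1} ρ_i` and the `ρ_i` normalise the image of `φ`, every element of `VL n` is
  `φ(x) h` with `h` in the subgroup generated by the `ρ_i` (`exists_decomp`). If it lies in `ker π`
  then `π h = 1`, so `h = 1`: this is the Coxeter presentation of `S_n` (`pi_injOn_rhoSub`), proved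
  by writing an element of `⟨ρ_1, …, ρ_{m+1}⟩` as one of `⟨ρ_1, …, ρ_m⟩` times
  `ρ_{m+1} ρ_m ⋯ ρ_k` and following the point `k`.
-/

open FreeGroup

/-- Generators of the virtual triplet group `VL n`: `Sum.inl i` is `y_{i+1}`,
`Sum.inr i` is `ρ_{i+1}`. -/
abbrev VLGen (n : ℕ) := Fin (n - 1) ⊕ Fin (n - 1)

def fY {n : ℕ} (i : Fin (n - 1)) : FreeGroup (VLGen n) := FreeGroup.of (Sum.inl i)
def fP {n : ℕ} (i : Fin (n - 1)) : FreeGroup (VLGen n) := FreeGroup.of (Sum.inr i)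

/-- Defining relators of the virtual triplet group `VL n` (indices are 0-based: index `i`
corresponds to the generator with subscript `i+1`). -/
def vlRels (n : ℕ) : Set (FreeGroup (VLGen n)) :=
  {r | (∃ i, r = fY i ^ 2) ∨ (∃ i, r = fP i ^ 2) ∨
    (∃ i j : Fin (n - 1), (i : ℕ) + 2 ≤ (j : ℕ) ∧ r = fP i * fP j * (fP i)⁻¹ * (fP j)⁻¹) ∨
    (∃ i j : Fin (n - 1), ((i : ℕ) + 2 ≤ (j : ℕ) ∨ (j : ℕ) + 2 ≤ (i : ℕ)) ∧
      r = fY i * fP j * (fY i)⁻¹ * (fP j)⁻¹) ∨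
    (∃ i j : Fin (n - 1), (j : ℕ) = (i : ℕ) + 1 ∧
      r = fY i * fY j * fY i * (fY j * fY i * fY j)⁻¹) ∨
    (∃ i j : Fin (n - 1), (j : ℕ) = (i : ℕ) + 1 ∧
      r = fP i * fP j * fP i * (fP j * fP i * fP j)⁻¹) ∨
    (∃ i j : Fin (n - 1), (j : ℕ) = (i : ℕ) + 1 ∧
      r = fP i * fY j * fP i * (fP j * fY i * fP j)⁻¹)}

/-- The virtual triplet group `VL n`. -/
abbrev VL (n : ℕ) := PresentedGroup (vlRels n)

/-- The generator `y_{i+1}` of `VL n`. -/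
def yG {n : ℕ} (i : Fin (n - 1)) : VL n := PresentedGroup.of (Sum.inl i)
/-- The generator `ρ_{i+1}` of `VL n`. -/
def pG {n : ℕ} (i : Fin (n - 1)) : VL n := PresentedGroup.of (Sum.inr i)

/-- The generator `y_k` of `VL n` with 1-based subscript `k` (junk value `1` if `k` is
out of range). -/
def yN (n k : ℕ) : VL n :=
  if h : 1 ≤ k ∧ k ≤ n - 1 then yG ⟨k - 1, by omega⟩ else 1

/-- The generator `ρ_k` of `VL n` with 1-based subscript `k` (junk value `1` if `k` is
out of range). -/
def pN (n k : ℕ) : VL n :=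
  if h : 1 ≤ k ∧ k ≤ n - 1 then pG ⟨k - 1, by omega⟩ else 1

/-- For `i < j`, the element `κ_{i,j} = ρ_{j-1} ρ_{j-2} ⋯ ρ_{i+1} (y_i ρ_i) ρ_{i+1} ⋯ ρ_{j-1}`
of `VL n` (1-based subscripts); for `j = i+1` this is `y_i ρ_i`. -/
def kappaLT (n i j : ℕ) : VL n :=
  (((List.range' (i + 1) (j - 1 - i)).map (pN n)).reverse).prod * (yN n i * pN n i) *
    ((List.range' (i + 1) (j - 1 - i)).map (pN n)).prod

/-- The element `κ_{i,j}` of `VL n`, for `1 ≤ i ≠ j ≤ n` (1-based subscripts), with the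
convention `κ_{j,i} = κ_{i,j}⁻¹` for `i < j`. -/
def kappa (n i j : ℕ) : VL n := if i < j then kappaLT n i j else (kappaLT n j i)⁻¹

/-- Index set for the generators `κ_{i,j}`, `1 ≤ i < j ≤ n` (0-based pairs). -/
abbrev PairIdx (n : ℕ) := {p : Fin n × Fin n // p.1 < p.2}

/-- Relators of the presentation of the pure virtual triplet group `PVL n`
(Theorem 4.2): `x_{i,j} x_{i,k} x_{j,k} = x_{j,k} x_{i,k} x_{i,j}` for `i < j < k`. -/
def pvlRels (n : ℕ) : Set (FreeGroup (PairIdx n)) :=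
  {r | ∃ a b c : PairIdx n, a.1.1 = b.1.1 ∧ a.1.2 = c.1.1 ∧ b.1.2 = c.1.2 ∧
    r = FreeGroup.of a * FreeGroup.of b * FreeGroup.of c *
      (FreeGroup.of c * FreeGroup.of b * FreeGroup.of a)⁻¹}

/-! ### Relations between the generators of `VL n` -/

lemma yG_sq {n : ℕ} (i : Fin (n - 1)) : (yG i * yG i : VL n) = 1 := by
  have : PresentedGroup.mk (vlRels n) (fY i ^ 2) = 1 :=
    PresentedGroup.one_of_mem (Or.inl ⟨i, rfl⟩)
  rw [pow_two, _root_.map_mul] at this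
  exact this

lemma pG_sq {n : ℕ} (i : Fin (n - 1)) : (pG i * pG i : VL n) = 1 := by
  have : PresentedGroup.mk (vlRels n) (fP i ^ 2) = 1 :=
    PresentedGroup.one_of_mem (Or.inr (Or.inl ⟨i, rfl⟩))
  rw [pow_two, _root_.map_mul] at this
  exact this

lemma pG_comm {n : ℕ} (i j : Fin (n - 1)) (h : (i : ℕ) + 2 ≤ j) :
    (pG i * pG j : VL n) = pG j * pG i := by
  have : PresentedGroup.mk (vlRels n) (fP i * fP j * (fP i)⁻¹ * (fP j)⁻¹) = 1 :=
    PresentedGroup.one_of_mem (Or.inr (Or.inr (Or.inl ⟨i, j, h, rfl⟩)))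
  simp only [_root_.map_mul, _root_.map_inv] at this
  exact mul_inv_eq_iff_eq_mul.1 (mul_inv_eq_one.1 this)

lemma yG_pG_comm {n : ℕ} (i j : Fin (n - 1)) (h : (i : ℕ) + 2 ≤ j ∨ (j : ℕ) + 2 ≤ i) :
    (yG i * pG j : VL n) = pG j * yG i := by
  have : PresentedGroup.mk (vlRels n) (fY i * fP j * (fY i)⁻¹ * (fP j)⁻¹) = 1 :=
    PresentedGroup.one_of_mem (Or.inr (Or.inr (Or.inr (Or.inl ⟨i, j, h, rfl⟩))))
  simp only [_root_.map_mul, _root_.map_inv] at this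
  exact mul_inv_eq_iff_eq_mul.1 (mul_inv_eq_one.1 this)

lemma yG_braid {n : ℕ} (i j : Fin (n - 1)) (h : (j : ℕ) = i + 1) :
    (yG i * yG j * yG i : VL n) = yG j * yG i * yG j := by
  have : PresentedGroup.mk (vlRels n) (fY i * fY j * fY i * (fY j * fY i * fY j)⁻¹) = 1 :=
    PresentedGroup.one_of_mem (Or.inr (Or.inr (Or.inr (Or.inr (Or.inl ⟨i, j, h, rfl⟩)))))
  simp only [_root_.map_mul, _root_.map_inv] at this
  exact mul_inv_eq_one.1 this

lemma pG_braid {n : ℕ} (i j : Fin (n - 1)) (h : (j : ℕ) = i + 1) :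
    (pG i * pG j * pG i : VL n) = pG j * pG i * pG j := by
  have : PresentedGroup.mk (vlRels n) (fP i * fP j * fP i * (fP j * fP i * fP j)⁻¹) = 1 :=
    PresentedGroup.one_of_mem (Or.inr (Or.inr (Or.inr (Or.inr (Or.inr (Or.inl ⟨i, j, h, rfl⟩))))))
  simp only [_root_.map_mul, _root_.map_inv] at this
  exact mul_inv_eq_one.1 this

lemma pG_yG_braid {n : ℕ} (i j : Fin (n - 1)) (h : (j : ℕ) = i + 1) :
    (pG i * yG j * pG i : VL n) = pG j * yG i * pG j := by
  have : PresentedGroup.mk (vlRels n) (fP i * fY j * fP i * (fP j * fY i * fP j)⁻¹) = 1 :=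
    PresentedGroup.one_of_mem (Or.inr (Or.inr (Or.inr (Or.inr (Or.inr (Or.inr ⟨i, j, h, rfl⟩))))))
  simp only [_root_.map_mul, _root_.map_inv] at this
  exact mul_inv_eq_one.1 this

lemma yN_sq (n s : ℕ) : yN n s * yN n s = 1 := by
  unfold yN; split_ifs
  · exact yG_sq _
  · simp

lemma pN_sq (n s : ℕ) : pN n s * pN n s = 1 := by
  unfold pN; split_ifs
  · exact pG_sq _
  · simp

lemma pN_inv (n s : ℕ) : (pN n s)⁻¹ = pN n s := inv_eq_of_mul_eq_one_left (pN_sq n s)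

lemma yN_inv (n s : ℕ) : (yN n s)⁻¹ = yN n s := inv_eq_of_mul_eq_one_left (yN_sq n s)

lemma pN_comm (n s t : ℕ) (h : s + 2 ≤ t ∨ t + 2 ≤ s) : pN n s * pN n t = pN n t * pN n s := by
  unfold pN; split_ifs
  · rcases h with h | h
    · exact pG_comm _ _ (by simp only; omega)
    · exact (pG_comm _ _ (by simp only; omega)).symm
  all_goals simp

lemma yN_pN_comm (n s t : ℕ) (h : s + 2 ≤ t ∨ t + 2 ≤ s) :
    yN n s * pN n t = pN n t * yN n s := by
  unfold pN yN; split_ifs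
  · exact yG_pG_comm _ _ (by simp only; omega)
  all_goals simp

lemma yN_braid (n s : ℕ) (h : 1 ≤ s) (h' : s + 2 ≤ n) :
    yN n s * yN n (s + 1) * yN n s = yN n (s + 1) * yN n s * yN n (s + 1) := by
  unfold yN
  rw [dif_pos (by omega), dif_pos (by omega)]
  exact yG_braid _ _ (by simp only; omega)

lemma pN_braid (n s : ℕ) (h : 1 ≤ s) (h' : s + 2 ≤ n) :
    pN n s * pN n (s + 1) * pN n s = pN n (s + 1) * pN n s * pN n (s + 1) := by
  unfold pN
  rw [dif_pos (by omega), dif_pos (by omega)]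
  exact pG_braid _ _ (by simp only; omega)

lemma pN_yN_braid (n s : ℕ) (h : 1 ≤ s) (h' : s + 2 ≤ n) :
    pN n s * yN n (s + 1) * pN n s = pN n (s + 1) * yN n s * pN n (s + 1) := by
  unfold pN yN
  rw [dif_pos (by omega), dif_pos (by omega), dif_pos (by omega), dif_pos (by omega)]
  exact pG_yG_braid _ _ (by simp only; omega)

/-! ### Conjugation of `κ_{i,j}` by the generators `ρ_s` -/

/-- Conjugation by `ρ_s`, as an endomorphism of `VL n`. -/
def cj (n s : ℕ) : VL n →* VL n := (MulAut.conj (pN n s)).toMonoidHom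

lemma cj_apply (n s : ℕ) (x : VL n) : cj n s x = pN n s * x * pN n s := by
  simp [cj, pN_inv]

lemma cj_cj (n s : ℕ) (x : VL n) : cj n s (cj n s x) = x := by
  simp only [cj_apply]
  calc _ = (pN n s * pN n s) * x * (pN n s * pN n s) := by group
    _ = x := by simp [pN_sq]

lemma cj_comm (n s t : ℕ) (h : s + 2 ≤ t ∨ t + 2 ≤ s) (x : VL n) :
    cj n s (cj n t x) = cj n t (cj n s x) := by
  simp only [cj_apply]
  calc _ = (pN n s * pN n t) * x * (pN n t * pN n s) := by group
    _ = (pN n t * pN n s) * x * (pN n s * pN n t) := by rw [pN_comm n s t h]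
    _ = _ := by group

lemma cj_braid (n s : ℕ) (h : 1 ≤ s) (h' : s + 2 ≤ n) (x : VL n) :
    cj n s (cj n (s + 1) (cj n s x)) = cj n (s + 1) (cj n s (cj n (s + 1) x)) := by
  simp only [cj_apply]
  calc _ = (pN n s * pN n (s + 1) * pN n s) * x * (pN n s * pN n (s + 1) * pN n s) := by group
    _ = _ := by rw [pN_braid n s h h']; group

lemma kappaLT_self_succ (n i : ℕ) : kappaLT n i (i + 1) = yN n i * pN n i := by
  simp [kappaLT]

lemma kappaLT_succ (n i j : ℕ) (h : i < j) : kappaLT n i (j + 1) = cj n j (kappaLT n i j) := by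
  have e : j + 1 - 1 - i = (j - 1 - i) + 1 := by omega
  have e' : i + 1 + (j - 1 - i) = j := by omega
  rw [cj_apply, kappaLT, e, List.range'_1_concat, e']
  simp [kappaLT, mul_assoc]

lemma cj_top (n i j : ℕ) (h : i < j) : cj n j (kappaLT n i (j + 1)) = kappaLT n i j := by
  rw [kappaLT_succ n i j h, cj_cj]

lemma cj_self (n i : ℕ) : cj n i (kappaLT n i (i + 1)) = (kappaLT n i (i + 1))⁻¹ := by
  rw [kappaLT_self_succ, cj_apply, mul_inv_rev, yN_inv, pN_inv]
  calc _ = pN n i * yN n i * (pN n i * pN n i) := by group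
    _ = _ := by rw [pN_sq]; simp

lemma cj_bot (n i j : ℕ) (hi : 1 ≤ i) (h : i + 2 ≤ j) (hj : j ≤ n) :
    cj n i (kappaLT n i j) = kappaLT n (i + 1) j := by
  induction j, h using Nat.le_induction with
  | base =>
    have h1 : cj n i (yN n (i + 1)) = cj n (i + 1) (yN n i) := by
      simpa only [cj_apply] using pN_yN_braid n i hi hj
    have h2 : cj n i (pN n (i + 1)) = cj n (i + 1) (pN n i) := by
      simpa only [cj_apply] using pN_braid n i hi hj
    rw [kappaLT_succ n i (i + 1) (by omega), kappaLT_self_succ, kappaLT_self_succ, _root_.map_mul,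
      ← h1, ← h2, _root_.map_mul, cj_cj, cj_cj]
  | succ j h ih =>
    rw [kappaLT_succ n i j (by omega), cj_comm n i j (by omega), ih (by omega),
      kappaLT_succ n (i + 1) j (by omega)]

lemma cj_bot' (n i j : ℕ) (hi : 1 ≤ i) (h : i + 2 ≤ j) (hj : j ≤ n) :
    cj n i (kappaLT n (i + 1) j) = kappaLT n i j := by
  rw [← cj_bot n i j hi h hj, cj_cj]

lemma cj_far (n s i j : ℕ) (hi : 1 ≤ i) (hij : i < j) (hj : j ≤ n)
    (h1 : s + 1 ≠ i) (h2 : s ≠ i) (h3 : s + 1 ≠ j) (h4 : s ≠ j) :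
    cj n s (kappaLT n i j) = kappaLT n i j := by
  induction j using Nat.strong_induction_on generalizing s with
  | _ j ih =>
    obtain ⟨j, rfl⟩ : ∃ k, j = k + 1 := ⟨j - 1, by omega⟩
    rcases Nat.lt_or_ge i j with hij' | hij'
    · rw [kappaLT_succ n i j hij']
      by_cases hs : s + 1 = j
      · subst hs
        rw [kappaLT_succ n i s (by omega), cj_braid n s (by omega) (by omega),
          ih s (by omega) (s + 1) (by omega) (by omega) (by omega) (by omega) (by omega) (by omega)]
      · rw [cj_comm n s j (by omega),
          ih j (by omega) s (by omega) (by omega) (by omega) (by omega) (by omega) (by omega)]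
    · obtain rfl : i = j := by omega
      rw [kappaLT_self_succ, cj_apply]
      calc _ = (pN n s * yN n i) * (pN n i * pN n s) := by group
        _ = yN n i * (pN n s * pN n s) * pN n i := by
          rw [← yN_pN_comm n i s (by omega), pN_comm n i s (by omega)]; group
        _ = _ := by rw [pN_sq, mul_one]

lemma kappa_inv (n i j : ℕ) (h : i ≠ j) : (kappa n i j)⁻¹ = kappa n j i := by
  unfold kappa
  split_ifs
  · omega
  · rfl
  · simp
  · omega

lemma cj_kappa_lt (n s i j : ℕ) (hs : 1 ≤ s) (hi : 1 ≤ i) (hij : i < j)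
    (hj : j ≤ n) :
    cj n s (kappa n i j) = kappa n (Equiv.swap s (s + 1) i) (Equiv.swap s (s + 1) j) := by
  have hk : kappa n i j = kappaLT n i j := if_pos hij
  rw [hk]
  by_cases h2 : s = i
  · subst h2
    rw [Equiv.swap_apply_left]
    by_cases h3 : s + 1 = j
    · subst h3
      rw [Equiv.swap_apply_right, cj_self, kappa, if_neg (by omega)]
    · rw [Equiv.swap_apply_of_ne_of_ne (by omega) (by omega), kappa, if_pos (by omega),
        cj_bot n s j hi (by omega) hj]
  by_cases h1 : s + 1 = i
  · subst h1
    rw [Equiv.swap_apply_right, Equiv.swap_apply_of_ne_of_ne (by omega) (by omega), kappa,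
      if_pos (by omega), cj_bot' n s j hs (by omega) hj]
  rw [Equiv.swap_apply_of_ne_of_ne (Ne.symm h2) (Ne.symm h1)]
  by_cases h3 : s + 1 = j
  · subst h3
    rw [Equiv.swap_apply_right, kappa, if_pos (by omega), cj_top n i s (by omega)]
  by_cases h4 : s = j
  · subst h4
    rw [Equiv.swap_apply_left, kappa, if_pos (by omega), kappaLT_succ n i s (by omega)]
  rw [Equiv.swap_apply_of_ne_of_ne (Ne.symm h4) (Ne.symm h3), kappa, if_pos (by omega),
    cj_far n s i j hi hij hj h1 h2 h3 h4]

/-- Conjugation by `ρ_s` permutes the elements `κ_{i,j}` (with `κ_{j,i} = κ_{i,j}⁻¹`) through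
the action of the transposition `(s, s+1)` on the indices. -/
lemma cj_kappa (n s i j : ℕ) (hs : 1 ≤ s) (hi : 1 ≤ i) (hj : 1 ≤ j)
    (hij : i ≠ j) (hin : i ≤ n) (hjn : j ≤ n) :
    cj n s (kappa n i j) = kappa n (Equiv.swap s (s + 1) i) (Equiv.swap s (s + 1) j) := by
  rcases Nat.lt_or_gt_of_ne hij with h | h
  · exact cj_kappa_lt n s i j hs hi h hjn
  · rw [← kappa_inv n j i hij.symm, _root_.map_inv, cj_kappa_lt n s j i hs hj h hin,
      kappa_inv _ _ _ (fun e => hij.symm ((Equiv.swap s (s + 1)).injective e))]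

/-- The relation for `(i, i+1, i+2)` is the braid relation between `y_i` and `y_{i+1}`. Conjugation
by `ρ_{j+1}` and then `ρ_j` carries the one for `(i, j, j+1)` to `(i, j+1, j+2)`, and conjugation
by `ρ_k` carries the one for `(i, j, k)` to `(i, j, k+1)`. -/
lemma kappa_rel (n i j k : ℕ) (hi : 1 ≤ i) (hij : i < j) (hjk : j < k) (hk : k ≤ n) :
    kappaLT n i j * kappaLT n i k * kappaLT n j k =
      kappaLT n j k * kappaLT n i k * kappaLT n i j := by
  induction k, hjk using Nat.le_induction with
  | base =>
    induction j, hij using Nat.le_induction with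
    | base =>
      rw [kappaLT_succ n i (i + 1) (by omega)]
      simp only [cj_apply, kappaLT_self_succ]
      have hy := yN_braid n i hi hk
      have hp := pN_braid n i hi hk
      have hm := pN_yN_braid n i hi hk
      have sp := pN_sq n i
      have sq := pN_sq n (i + 1)
      -- with `y_i, y_{i+1} = a, b` and `ρ_i, ρ_{i+1} = p, q`, both sides equal `(a b a) (q p q)`
      generalize yN n i = a at *
      generalize yN n (i + 1) = b at *
      generalize pN n i = p at *
      generalize pN n (i + 1) = q at *
      have ip : p⁻¹ = p := inv_eq_of_mul_eq_one_left sp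
      have iq : q⁻¹ = q := inv_eq_of_mul_eq_one_left sq
      have hb : p * q * a = b * p * q := by
        calc p * q * a = p * (q * a * q) * q⁻¹ := by group
          _ = (p * p) * b * p * q := by rw [← hm, iq]; group
          _ = b * p * q := by rw [sp, one_mul]
      have ha : q * p * b = a * q * p := by
        calc q * p * b = q * (p * b * p) * p⁻¹ := by group
          _ = (q * q) * a * q * p := by rw [hm, ip]; group
          _ = a * q * p := by rw [sq, one_mul]
      have hpq : p * q * (p * q) = q * p := by
        calc p * q * (p * q) = (p * q * p) * q := by group
          _ = q * p * (q * q) := by rw [hp]; group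
          _ = q * p := by rw [sq, mul_one]
      calc a * p * (q * (a * p) * q) * (b * q) = a * (p * q * a) * (p * q) * b * q := by group
        _ = a * b * (p * q * (p * q)) * b * q := by rw [hb]; group
        _ = a * b * (q * p * b) * q := by rw [hpq]; group
        _ = (a * b * a) * (q * p * q) := by rw [ha]; group
        _ = b * a * (b * p * q) * p := by rw [hy, ← hp]; group
        _ = b * (q * q) * a * p * q * a * p := by rw [← hb, sq]; group
        _ = b * q * (q * (a * p) * q) * (a * p) := by group
    | succ j h ih =>
      have := congrArg (fun x => cj n j (cj n (j + 1) x)) (ih (by omega))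
      simp only [_root_.map_mul] at this
      rwa [← kappaLT_succ n i (j + 1) (by omega), ← kappaLT_succ n j (j + 1) (by omega),
        cj_far n (j + 1) i j hi (by omega) (by omega) (by omega) (by omega) (by omega) (by omega),
        ← kappaLT_succ n i j (by omega), cj_bot n j (j + 1 + 1) (by omega) (by omega) hk,
        cj_far n j i (j + 1 + 1) hi (by omega) hk (by omega) (by omega) (by omega) (by omega)]
        at this
  | succ k h ih =>
    have := congrArg (cj n k) (ih (by omega))
    simp only [_root_.map_mul] at this
    rwa [← kappaLT_succ n i k (by omega), ← kappaLT_succ n j k (by omega),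
      cj_far n k i j hi hij (by omega) (by omega) (by omega) (by omega) (by omega)] at this

/-! ### The subgroup generated by the `ρ_i` -/

/-- The subgroup `⟨ρ_1, …, ρ_m⟩` of `VL n`. -/
def rhoSub (n m : ℕ) : Subgroup (VL n) := Subgroup.closure (pN n '' Set.Icc 1 m)

/-- The descending product `ρ_{k+l-1} ⋯ ρ_{k+1} ρ_k` of length `l`. -/
def desc (n k : ℕ) : ℕ → VL n
  | 0 => 1
  | l + 1 => pN n (k + l) * desc n k l

lemma pN_mem_rhoSub (n m k : ℕ) (h : 1 ≤ k) (h' : k ≤ m) : pN n k ∈ rhoSub n m :=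
  Subgroup.subset_closure ⟨k, ⟨h, h'⟩, rfl⟩

lemma desc_succ_right (n k l : ℕ) : desc n k (l + 1) = desc n (k + 1) l * pN n k := by
  induction l with
  | zero => simp [desc]
  | succ l ih =>
    rw [desc, ih, desc, ← mul_assoc]
    congr 3; omega

lemma desc_comm (n k l j : ℕ) (h : j + 2 ≤ k ∨ k + l + 1 ≤ j) :
    desc n k l * pN n j = pN n j * desc n k l := by
  induction l with
  | zero => simp [desc]
  | succ l ih =>
    rw [desc, mul_assoc, ih (by omega), ← mul_assoc, ← mul_assoc, pN_comm n (k + l) j (by omega)]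

lemma desc_shift (n k l j : ℕ) (hk : 1 ≤ k) (hkj : k ≤ j) (hjl : j + 2 ≤ k + l)
    (hn : k + l ≤ n) : desc n k l * pN n (j + 1) = pN n j * desc n k l := by
  induction l with
  | zero => omega
  | succ l ih =>
    rcases Nat.lt_or_ge (j + 1) (k + l) with h | h
    · rw [desc, mul_assoc, ih (by omega) (by omega), ← mul_assoc, ← mul_assoc,
        pN_comm n (k + l) j (by omega)]
    · obtain ⟨l, rfl⟩ : ∃ m, l = m + 1 := ⟨l - 1, by omega⟩
      obtain rfl : j = k + l := by omega
      calc desc n k (l + 1 + 1) * pN n (k + l + 1)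
          = pN n (k + l + 1) * pN n (k + l) * (desc n k l * pN n (k + l + 1)) := by
            simp only [desc, mul_assoc]; rfl
        _ = (pN n (k + l + 1) * pN n (k + l) * pN n (k + l + 1)) * desc n k l := by
            rw [desc_comm n k l _ (by omega)]; simp only [mul_assoc]
        _ = _ := by
            rw [← pN_braid n (k + l) (by omega) (by omega)]
            simp only [desc, mul_assoc]; rfl

/-- The elements `ρ_{m+1} ⋯ ρ_k`, `1 ≤ k ≤ m + 2`, meet every right coset of `⟨ρ_1, …, ρ_m⟩` in
`⟨ρ_1, …, ρ_{m+1}⟩`. -/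
lemma rhoSub_decomp (n m : ℕ) (hm : m + 2 ≤ n) (g : VL n) (hg : g ∈ rhoSub n (m + 1)) :
    ∃ h ∈ rhoSub n m, ∃ k l, 1 ≤ k ∧ k + l = m + 2 ∧ g = h * desc n k l := by
  have key : ∀ x ∈ pN n '' Set.Icc 1 (m + 1), ∀ g : VL n,
      (∃ h ∈ rhoSub n m, ∃ k l, 1 ≤ k ∧ k + l = m + 2 ∧ g = h * desc n k l) →
      ∃ h ∈ rhoSub n m, ∃ k l, 1 ≤ k ∧ k + l = m + 2 ∧ g * x = h * desc n k l := by
    rintro _ ⟨j, ⟨hj1, hj2⟩, rfl⟩ _ ⟨h, hh, k, l, hk, hkl, rfl⟩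
    rcases lt_trichotomy (j + 1) k with hjk | hjk | hjk
    · refine ⟨h * pN n j, mul_mem hh (pN_mem_rhoSub n m j hj1 (by omega)), k, l, hk, hkl, ?_⟩
      rw [mul_assoc, desc_comm n k l j (by omega), mul_assoc]
    · subst hjk
      exact ⟨h, hh, j, l + 1, hj1, by omega, by rw [desc_succ_right, mul_assoc]⟩
    · rcases Nat.eq_or_lt_of_le (by omega : k ≤ j) with hkj | hkj
      · subst hkj
        obtain ⟨l, rfl⟩ : ∃ l', l = l' + 1 := ⟨l - 1, by omega⟩
        exact ⟨h, hh, k + 1, l, by omega, by omega, by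
          rw [desc_succ_right, mul_assoc, mul_assoc, pN_sq, mul_one]⟩
      · obtain ⟨j, rfl⟩ : ∃ j', j = j' + 1 := ⟨j - 1, by omega⟩
        refine ⟨h * pN n j, mul_mem hh (pN_mem_rhoSub n m j (by omega) (by omega)), k, l, hk,
          hkl, ?_⟩
        rw [mul_assoc, desc_shift n k l j hk (by omega) (by omega) (by omega), mul_assoc]
  induction hg using Subgroup.closure_induction_right with
  | one => exact ⟨1, one_mem _, m + 2, 0, by omega, by omega, by simp [desc]⟩
  | mul_right x _ y hy ih => exact key y hy x ih
  | mul_inv_cancel x _ y hy ih =>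
    have hy' : y⁻¹ = y := by obtain ⟨j, -, rfl⟩ := hy; exact pN_inv n j
    rw [hy']
    exact key y hy x ih

/-- The point `i`, for `i < n - 1`, in `Fin n`. -/
abbrev loF {n : ℕ} (i : Fin (n - 1)) : Fin n := Fin.castLE (Nat.sub_le n 1) i

/-- The point `i + 1`, for `i < n - 1`, in `Fin n`. -/
abbrev hiF {n : ℕ} (i : Fin (n - 1)) : Fin n := ⟨(i : ℕ) + 1, by have := i.isLt; omega⟩

/-- Passage from the 0-based transposition on `Fin n` to the 1-based one on `ℕ`. -/
lemma swap_val {n : ℕ} (i : Fin (n - 1)) (x : Fin n) :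
    ((Equiv.swap (loF i) (hiF i) x : Fin n) : ℕ) + 1 =
      Equiv.swap ((i : ℕ) + 1) ((i : ℕ) + 1 + 1) ((x : ℕ) + 1) := by
  simp only [Equiv.swap_apply_def, Fin.ext_iff, Fin.val_castLE]
  split_ifs <;> simp_all

lemma pi_pN_val {n : ℕ} (π : VL n →* Equiv.Perm (Fin n))
    (hπp : ∀ i : Fin (n - 1), π (pG i) = Equiv.swap (loF i) (hiF i))
    (s : ℕ) (hs : 1 ≤ s) (hsn : s + 1 ≤ n) (x : Fin n) :
    ((π (pN n s) x : Fin n) : ℕ) + 1 = Equiv.swap s (s + 1) ((x : ℕ) + 1) := by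
  rw [pN, dif_pos (by omega), hπp, swap_val]
  simp only [Nat.sub_add_cancel hs]

lemma pi_desc {n : ℕ} (π : VL n →* Equiv.Perm (Fin n))
    (hπp : ∀ i : Fin (n - 1), π (pG i) = Equiv.swap (loF i) (hiF i))
    (k l : ℕ) (hk : 1 ≤ k) (hkl : k + l ≤ n) (x : Fin n) (hx : (x : ℕ) + 1 = k) :
    ((π (desc n k l) x : Fin n) : ℕ) + 1 = k + l := by
  induction l with
  | zero => simpa [desc] using hx
  | succ l ih =>
    rw [desc, _root_.map_mul, Equiv.Perm.mul_apply, pi_pN_val π hπp _ (by omega) (by omega),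
      ih (by omega), Equiv.swap_apply_left, add_assoc]

/-- Elements of `⟨ρ_1, …, ρ_m⟩` fix the points `m + 2, …, n` (1-based). -/
lemma pi_rhoSub_fix {n : ℕ} (π : VL n →* Equiv.Perm (Fin n))
    (hπp : ∀ i : Fin (n - 1), π (pG i) = Equiv.swap (loF i) (hiF i))
    (m : ℕ) (g : VL n) (hg : g ∈ rhoSub n m) (x : Fin n) (hx : m < x) :
    π g x = x := by
  have hle : rhoSub n m ≤ (MulAction.stabilizer (Equiv.Perm (Fin n)) x).comap π := by
    refine (Subgroup.closure_le _).2 ?_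
    rintro _ ⟨j, ⟨hj1, hj2⟩, rfl⟩
    have := pi_pN_val π hπp j hj1 (by omega) x
    rw [Equiv.swap_apply_of_ne_of_ne (by omega) (by omega)] at this
    exact Fin.ext (Nat.succ_injective this)
  exact hle hg

/-- The Coxeter presentation of the symmetric group: `π` is injective on `⟨ρ_1, …, ρ_m⟩`. -/
lemma pi_injOn_rhoSub {n : ℕ} (π : VL n →* Equiv.Perm (Fin n))
    (hπp : ∀ i : Fin (n - 1), π (pG i) = Equiv.swap (loF i) (hiF i))
    (m : ℕ) (hm : m + 1 ≤ n) (g : VL n) (hg : g ∈ rhoSub n m) (h1 : π g = 1) : g = 1 := by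
  induction m generalizing g with
  | zero =>
    have : rhoSub n 0 = ⊥ := by simp [rhoSub]
    rw [this] at hg
    exact hg
  | succ m ih =>
    obtain ⟨h, hh, k, l, hk, hkl, rfl⟩ := rhoSub_decomp n m (by omega) g hg
    -- `ρ_{m+1} ⋯ ρ_k` sends `k` to `m + 2`, which `h` fixes; hence `k = m + 2`
    have hd := pi_desc π hπp k l hk (by omega) ⟨k - 1, by omega⟩ (by simp only; omega)
    have hf := pi_rhoSub_fix π hπp m h hh (π (desc n k l) ⟨k - 1, by omega⟩) (by omega)
    rw [← Equiv.Perm.mul_apply, ← _root_.map_mul, h1, Equiv.Perm.one_apply] at hf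
    rw [← hf] at hd
    obtain rfl : l = 0 := by simp only at hd; omega
    simp only [desc, mul_one] at h1 ⊢
    exact ih (by omega) h hh h1

/-! ### The action of the symmetric group on the presented group -/

/-- The group presented by the `x_{i,j}`. -/
abbrev PG (n : ℕ) := PresentedGroup (pvlRels n)

/-- The element `x_{a,b}` for arbitrary `a, b`, with `x_{b,a} = x_{a,b}⁻¹` and `x_{a,a} = 1`. -/
def X {n : ℕ} (a b : Fin n) : PG n :=
  if h : a < b then PresentedGroup.of ⟨(a, b), h⟩
  else if h : b < a then (PresentedGroup.of ⟨(b, a), h⟩)⁻¹ else 1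

lemma X_of {n : ℕ} (p : PairIdx n) : X p.1.1 p.1.2 = PresentedGroup.of p := dif_pos p.2

lemma X_inv {n : ℕ} (a b : Fin n) : (X a b)⁻¹ = X b a := by
  unfold X
  split_ifs with h1 h2 h3
  · exact absurd h1 h2.asymm
  all_goals simp

lemma X_rel_lt {n : ℕ} (a b c : Fin n) (h1 : a < b) (h2 : b < c) :
    X a b * X a c * X b c = X b c * X a c * X a b := by
  have := PresentedGroup.one_of_mem (rels := pvlRels n)
    ⟨⟨(a, b), h1⟩, ⟨(a, c), h1.trans h2⟩, ⟨(b, c), h2⟩, rfl, rfl, rfl, rfl⟩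
  simp only [_root_.map_mul, _root_.map_inv] at this
  simp only [X, dif_pos h1, dif_pos h2, dif_pos (h1.trans h2)]
  exact mul_inv_eq_one.1 this

lemma X_self {n : ℕ} (a : Fin n) : X a a = 1 := by simp [X]

/-- Swapping two neighbouring indices turns the relation for `(a, b, c)` into an equivalent one,
which is why the relation holds for indices in any order. -/
lemma X_rel {n : ℕ} (a b c : Fin n) :
    X a b * X a c * X b c = X b c * X a c * X a b := by
  have s1 : ∀ a b c : Fin n, X a b * X a c * X b c = X b c * X a c * X a b →
      X b a * X b c * X a c = X a c * X b c * X b a := by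
    intro a b c h
    rw [← X_inv a b]
    calc (X a b)⁻¹ * X b c * X a c = (X a b)⁻¹ * (X b c * X a c * X a b) * (X a b)⁻¹ := by group
      _ = _ := by rw [← h]; group
  have s2 : ∀ a b c : Fin n, X a b * X a c * X b c = X b c * X a c * X a b →
      X a c * X a b * X c b = X c b * X a b * X a c := by
    intro a b c h
    rw [← X_inv b c]
    calc X a c * X a b * (X b c)⁻¹ = (X b c)⁻¹ * (X b c * X a c * X a b) * (X b c)⁻¹ := by group
      _ = _ := by rw [← h]; group
  rcases lt_trichotomy a b with h1 | rfl | h1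
  · rcases lt_trichotomy b c with h2 | rfl | h2
    · exact X_rel_lt a b c h1 h2
    · simp [X_self]
    · rcases lt_trichotomy a c with h3 | rfl | h3
      · exact s2 _ _ _ (X_rel_lt a c b h3 h2)
      · simp [X_self, ← X_inv a b]
      · exact s2 _ _ _ (s1 _ _ _ (X_rel_lt c a b h3 h1))
  · simp [X_self]
  · rcases lt_trichotomy b c with h2 | rfl | h2
    · rcases lt_trichotomy a c with h3 | rfl | h3
      · exact s1 _ _ _ (X_rel_lt b a c h1 h3)
      · simp [X_self, ← X_inv a b]
      · exact s1 _ _ _ (s2 _ _ _ (X_rel_lt b c a h2 h3))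
    · simp [X_self]
    · exact s1 _ _ _ (s2 _ _ _ (s1 _ _ _ (X_rel_lt c b a h2 h1)))

/-- The endomorphism `x_{a,b} ↦ x_{σ a, σ b}` of the presented group. -/
def act {n : ℕ} (σ : Equiv.Perm (Fin n)) : PG n →* PG n :=
  PresentedGroup.toGroup (f := fun p : PairIdx n => X (σ p.1.1) (σ p.1.2)) (by
    rintro _ ⟨⟨⟨a, b⟩, h1⟩, ⟨⟨a', c⟩, h2⟩, ⟨⟨b', c'⟩, h3⟩, e1, e2, e3, rfl⟩
    simp only at e1 e2 e3
    subst e1 e2 e3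
    simp only [_root_.map_mul, _root_.map_inv, FreeGroup.lift_apply_of]
    exact mul_inv_eq_one.2 (X_rel _ _ _))

lemma act_X {n : ℕ} (σ : Equiv.Perm (Fin n)) (a b : Fin n) : act σ (X a b) = X (σ a) (σ b) := by
  have key : ∀ a b : Fin n, a < b → act σ (X a b) = X (σ a) (σ b) := fun a b h => by
    rw [X, dif_pos h]; exact PresentedGroup.toGroup.of _
  rcases lt_trichotomy a b with h | h | h
  · exact key a b h
  · subst h; simp [X_self]
  · rw [← X_inv b a, _root_.map_inv, key b a h, X_inv]

/-- The action of `S_n` on the presented group by automorphisms. -/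
def actHom (n : ℕ) : Equiv.Perm (Fin n) →* MulAut (PG n) where
  toFun σ := MonoidHom.toMulEquiv (act σ) (act σ⁻¹)
    (PresentedGroup.ext fun p => by simp [← X_of, act_X])
    (PresentedGroup.ext fun p => by simp [← X_of, act_X])
  map_one' := by
    ext x
    have : act (1 : Equiv.Perm (Fin n)) = MonoidHom.id _ :=
      PresentedGroup.ext fun p => by simp [← X_of, act_X]
    exact DFunLike.congr_fun this x
  map_mul' σ τ := by
    ext x
    have : act (σ * τ) = (act σ).comp (act τ) :=
      PresentedGroup.ext fun p => by simp [← X_of, act_X]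
    exact DFunLike.congr_fun this x

lemma actHom_X {n : ℕ} (σ : Equiv.Perm (Fin n)) (a b : Fin n) :
    actHom n σ (X a b) = X (σ a) (σ b) := act_X σ a b

/-! ### The map from `VL n` to the semidirect product -/

/-- The adjacent transposition `(i, i+1)` of `Fin n`. -/
abbrev sw {n : ℕ} (i : Fin (n - 1)) : Equiv.Perm (Fin n) := Equiv.swap (loF i) (hiF i)

/-- Images in `PG n ⋊ S_n` of the generators of `VL n`: `ρ_i ↦ s_i` and
`y_i ↦ x_{i,i+1} s_i`, as forced by `y_i = κ_{i,i+1} ρ_i`. -/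
def sdGen (n : ℕ) : VLGen n → PG n ⋊[actHom n] Equiv.Perm (Fin n)
  | Sum.inl i => ⟨X (loF i) (hiF i), sw i⟩
  | Sum.inr i => ⟨1, sw i⟩

lemma sw_far {n : ℕ} (i j : Fin (n - 1)) (h : (i : ℕ) + 2 ≤ j ∨ (j : ℕ) + 2 ≤ i) :
    sw i (loF j) = loF j ∧ sw i (hiF j) = hiF j := by
  constructor <;> apply Equiv.swap_apply_of_ne_of_ne <;>
    simp only [ne_eq, Fin.ext_iff, Fin.val_castLE] <;> omega

lemma sw_comm {n : ℕ} (i j : Fin (n - 1)) (h : (i : ℕ) + 2 ≤ j ∨ (j : ℕ) + 2 ≤ i) :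
    sw i * sw j = sw j * sw i := by
  rw [Equiv.mul_swap_eq_swap_mul, (sw_far i j h).1, (sw_far i j h).2]

lemma sw_braid {n : ℕ} (i j : Fin (n - 1)) (h : (j : ℕ) = i + 1) :
    sw i * sw j * sw i = sw j * sw i * sw j := by
  have e : loF j = hiF i := Fin.ext h
  have h1 : loF i ≠ hiF i := by simp [Fin.ext_iff]
  have h2 : loF i ≠ hiF j := by simp [Fin.ext_iff]; omega
  have h3 : hiF i ≠ hiF j := by simp [Fin.ext_iff]; omega
  simp only [sw]
  rw [e, Equiv.swap_mul_swap_mul_swap h1 h2, Equiv.swap_comm (loF i), Equiv.swap_comm (hiF i) (hiF j),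
    Equiv.swap_mul_swap_mul_swap h3.symm h2.symm, Equiv.swap_comm]

lemma sdGen_rels (n : ℕ) : ∀ r ∈ vlRels n, FreeGroup.lift (sdGen n) r = 1 := by
  have hY : ∀ i, FreeGroup.lift (sdGen n) (fY i) = ⟨X (loF i) (hiF i), sw i⟩ := fun i =>
    FreeGroup.lift_apply_of
  have hP : ∀ i, FreeGroup.lift (sdGen n) (fP i) = ⟨1, sw i⟩ := fun i => FreeGroup.lift_apply_of
  rintro r (⟨i, rfl⟩ | ⟨i, rfl⟩ | ⟨i, j, h, rfl⟩ | ⟨i, j, h, rfl⟩ | ⟨i, j, h, rfl⟩ |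
    ⟨i, j, h, rfl⟩ | ⟨i, j, h, rfl⟩)
  · rw [pow_two, _root_.map_mul, hY]
    ext1
    · simp [actHom_X, ← X_inv (loF i) (hiF i)]
    · simp
  · rw [pow_two, _root_.map_mul, hP]
    ext1 <;> simp
  · simp only [_root_.map_mul, _root_.map_inv, hP]
    rw [mul_inv_eq_one, mul_inv_eq_iff_eq_mul]
    ext1
    · simp
    · exact sw_comm i j (Or.inl h)
  · simp only [_root_.map_mul, _root_.map_inv, hP, hY]
    rw [mul_inv_eq_one, mul_inv_eq_iff_eq_mul]
    ext1
    · simp [actHom_X, (sw_far j i h.symm).1, (sw_far j i h.symm).2]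
    · exact sw_comm i j h
  all_goals
    have e : loF j = hiF i := Fin.ext h
    have h1 : loF i ≠ hiF i := by simp [Fin.ext_iff]
    have h2 : loF i ≠ hiF j := by simp [Fin.ext_iff]; omega
    have h3 : hiF i ≠ hiF j := by simp [Fin.ext_iff]; omega
    have e1 : Equiv.swap (loF i) (hiF i) (hiF j) = hiF j :=
      Equiv.swap_apply_of_ne_of_ne h2.symm h3.symm
    have e2 : Equiv.swap (hiF i) (hiF j) (loF i) = loF i := Equiv.swap_apply_of_ne_of_ne h1 h2
  · simp only [_root_.map_mul, _root_.map_inv, hY]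
    rw [mul_inv_eq_one]
    ext1
    · simp only [SemidirectProduct.mul_left, SemidirectProduct.mul_right, actHom_X, e, sw,
        Equiv.Perm.mul_apply, Equiv.swap_apply_left, Equiv.swap_apply_right, e1, e2]
      exact X_rel _ _ _
    · exact sw_braid i j h
  · simp only [_root_.map_mul, _root_.map_inv, hP]
    rw [mul_inv_eq_one]
    ext1
    · simp
    · exact sw_braid i j h
  · simp only [_root_.map_mul, _root_.map_inv, hP, hY]
    rw [mul_inv_eq_one]
    ext1
    · simp only [SemidirectProduct.mul_left, SemidirectProduct.mul_right, actHom_X, e, sw,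
        Equiv.swap_apply_left, Equiv.swap_apply_right, e1, e2,
        _root_.map_one, one_mul, mul_one]
    · exact sw_braid i j h

/-- The homomorphism `VL n → PG n ⋊ S_n` with `ρ_i ↦ s_i` and `y_i ↦ x_{i,i+1} s_i`. -/
def psi (n : ℕ) : VL n →* PG n ⋊[actHom n] Equiv.Perm (Fin n) :=
  PresentedGroup.toGroup (sdGen_rels n)

lemma psi_pG {n : ℕ} (i : Fin (n - 1)) : psi n (pG i) = SemidirectProduct.inr (sw i) :=
  PresentedGroup.toGroup.of _

lemma psi_yG_pG {n : ℕ} (i : Fin (n - 1)) :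
    psi n (yG i * pG i) = SemidirectProduct.inl (X (loF i) (hiF i)) := by
  have h : psi n (yG i) = ⟨X (loF i) (hiF i), sw i⟩ := PresentedGroup.toGroup.of _
  rw [_root_.map_mul, psi_pG, h]
  ext1 <;> simp

lemma psi_kappaLT {n : ℕ} (i j : ℕ) (hij : i < j) (hj : j < n) :
    psi n (kappaLT n (i + 1) (j + 1)) =
      SemidirectProduct.inl (X ⟨i, hij.trans hj⟩ ⟨j, hj⟩) := by
  induction j, hij using Nat.le_induction with
  | base =>
    rw [kappaLT_self_succ, yN, pN, dif_pos (by omega), dif_pos (by omega)]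
    exact psi_yG_pG _
  | succ j h ih =>
    have hij : i < j := h
    have hp : psi n (pN n (j + 1)) = SemidirectProduct.inr (sw ⟨j, by omega⟩) := by
      rw [pN, dif_pos (by omega)]
      exact psi_pG _
    have hw : (SemidirectProduct.inr (φ := actHom n) (sw (n := n) ⟨j, by omega⟩)) =
        SemidirectProduct.inr (sw (n := n) ⟨j, by omega⟩)⁻¹ := by simp [sw]
    rw [kappaLT_succ n (i + 1) (j + 1) (by omega), cj_apply, _root_.map_mul, _root_.map_mul,
      ih (by omega), hp]
    nth_rewrite 2 [hw]
    rw [← SemidirectProduct.inl_aut, actHom_X]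
    congr 2
    · exact Equiv.swap_apply_of_ne_of_ne (by simp [Fin.ext_iff]; omega)
        (by simp [Fin.ext_iff]; omega)
    · exact Equiv.swap_apply_left _ _

/-! ### The homomorphism `x_{i,j} ↦ κ_{i,j}` -/

/-- The homomorphism `x_{i,j} ↦ κ_{i,j}` from the presented group to `VL n`. -/
def phi (n : ℕ) : PG n →* VL n :=
  PresentedGroup.toGroup
    (f := fun p : PairIdx n => kappaLT n ((p.1.1 : ℕ) + 1) ((p.1.2 : ℕ) + 1)) (by
    rintro _ ⟨⟨⟨a, b⟩, h1⟩, ⟨⟨a', c⟩, h2⟩, ⟨⟨b', c'⟩, h3⟩, e1, e2, e3, rfl⟩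
    simp only at e1 e2 e3
    subst e1 e2 e3
    simp only [_root_.map_mul, _root_.map_inv, FreeGroup.lift_apply_of]
    simp only [Fin.lt_def] at h1 h3
    exact mul_inv_eq_one.2 (kappa_rel n _ _ _ (by omega) (by omega) (by omega) (by omega)))

lemma phi_of {n : ℕ} (p : PairIdx n) :
    phi n (PresentedGroup.of p) = kappaLT n ((p.1.1 : ℕ) + 1) ((p.1.2 : ℕ) + 1) :=
  PresentedGroup.toGroup.of _

lemma phi_X {n : ℕ} (a b : Fin n) (h : a ≠ b) :
    phi n (X a b) = kappa n ((a : ℕ) + 1) ((b : ℕ) + 1) := by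
  have key : ∀ a b : Fin n, a < b → phi n (X a b) = kappa n ((a : ℕ) + 1) ((b : ℕ) + 1) :=
    fun a b h => by
      rw [kappa, if_pos (by simpa using h)]
      exact (congrArg (phi n) (X_of ⟨(a, b), h⟩)).trans (phi_of _)
  rcases lt_or_gt_of_ne h with h | h
  · exact key a b h
  · rw [← X_inv b a, _root_.map_inv, key b a h, kappa_inv]
    simpa [Fin.ext_iff] using h.ne

lemma psi_phi {n : ℕ} (x : PG n) : psi n (phi n x) = SemidirectProduct.inl x := by
  have : (psi n).comp (phi n) = SemidirectProduct.inl :=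
    PresentedGroup.ext fun p => by
      rw [MonoidHom.comp_apply, phi_of, psi_kappaLT _ _ p.2 p.1.2.2, ← X_of]
  exact DFunLike.congr_fun this x

lemma pG_mul_phi {n : ℕ} (i : Fin (n - 1)) (x : PG n) :
    pG i * phi n x = phi n (act (sw i) x) * pG i := by
  have hp : pN n ((i : ℕ) + 1) = pG i := by rw [pN, dif_pos (by omega)]; rfl
  have h : (cj n ((i : ℕ) + 1)).comp (phi n) = (phi n).comp (act (sw i)) :=
    PresentedGroup.ext fun p => by
      have hne := p.2.ne
      rw [MonoidHom.comp_apply, MonoidHom.comp_apply, ← X_of, phi_X _ _ hne, act_X,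
        phi_X _ _ (fun e => hne ((sw i).injective e)), swap_val, swap_val]
      exact cj_kappa n _ _ _ (by omega) (by omega) (by omega)
        (fun e => hne (Fin.ext (Nat.succ_injective e))) (by omega) (by omega)
  have hx := DFunLike.congr_fun h x
  simp only [MonoidHom.comp_apply] at hx
  rw [← hx, cj_apply, hp, mul_assoc, pG_sq, mul_one]

/-- `VL n` is the product of the image of `phi n` and the subgroup generated by the `ρ_i`. -/
lemma exists_decomp {n : ℕ} (g : VL n) : ∃ x : PG n, ∃ h ∈ rhoSub n (n - 1), g = phi n x * h := by
  have hr : ∀ i : Fin (n - 1), (pG i : VL n) ∈ rhoSub n (n - 1) := fun i =>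
    Subgroup.subset_closure ⟨(i : ℕ) + 1, ⟨by omega, by omega⟩, by
      rw [pN, dif_pos (by omega)]; rfl⟩
  have hP : ∀ i : Fin (n - 1), ∀ g : VL n,
      (∃ x : PG n, ∃ h ∈ rhoSub n (n - 1), g = phi n x * h) →
      ∃ x : PG n, ∃ h ∈ rhoSub n (n - 1), pG i * g = phi n x * h := by
    rintro i _ ⟨x, h, hh, rfl⟩
    exact ⟨act (sw i) x, pG i * h, mul_mem (hr i) hh, by
      rw [← mul_assoc, pG_mul_phi, mul_assoc]⟩
  have hY : ∀ i : Fin (n - 1), ∀ g : VL n,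
      (∃ x : PG n, ∃ h ∈ rhoSub n (n - 1), g = phi n x * h) →
      ∃ x : PG n, ∃ h ∈ rhoSub n (n - 1), yG i * g = phi n x * h := by
    intro i g hg
    obtain ⟨x, h, hh, e⟩ := hP i g hg
    have hk : phi n (X (loF i) (hiF i)) = yG i * pG i := by
      have hlt : loF i < hiF i := by simp [Fin.lt_def]
      rw [phi_X _ _ hlt.ne, kappa, if_pos (by simp)]
      refine (kappaLT_self_succ n _).trans ?_
      rw [yN, pN, dif_pos (by simp), dif_pos (by simp)]
      rfl
    refine ⟨X (loF i) (hiF i) * x, h, hh, ?_⟩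
    rw [_root_.map_mul, mul_assoc, ← e, hk]
    calc yG i * g = yG i * (pG i * pG i) * g := by rw [pG_sq, mul_one]
      _ = _ := by group
  have hgen : g ∈ Subgroup.closure (Set.range (PresentedGroup.of (rels := vlRels n))) := by
    rw [PresentedGroup.closure_range_of]; trivial
  induction hgen using Subgroup.closure_induction_left with
  | one => exact ⟨1, 1, one_mem _, by simp⟩
  | mul_left x hx y _ ih =>
    obtain ⟨i | i, rfl⟩ := hx
    · exact hY i y ih
    · exact hP i y ih
  | inv_mul_cancel x hx y _ ih =>
    obtain ⟨i | i, rfl⟩ := hx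
    · rw [show (PresentedGroup.of (Sum.inl i) : VL n)⁻¹ = yG i from
        inv_eq_of_mul_eq_one_left (yG_sq i)]
      exact hY i y ih
    · rw [show (PresentedGroup.of (Sum.inr i) : VL n)⁻¹ = pG i from
        inv_eq_of_mul_eq_one_left (pG_sq i)]
      exact hP i y ih

/-! ### The presentation of the kernel -/

/-- Let `π : VL n → S n` be the epimorphism sending both `yᵢ` and `ρᵢ`
to the transposition `(i, i+1)`, so `PVL n = ker π`.  The homomorphism from the group
presented by generators `x_{i,j}` (`1 ≤ i < j ≤ n`) and relations
`x_{i,j} x_{i,k} x_{j,k} = x_{j,k} x_{i,k} x_{i,j}` (`i < j < k`) to `VL n`, sending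
`x_{i,j}` to `κ_{i,j}`, is injective with image `PVL n`. -/
theorem stmt16 (n : ℕ) (hn : 2 ≤ n) (π : VL n →* Equiv.Perm (Fin n))
    (hπy : ∀ i : Fin (n - 1), π (yG i) =
      Equiv.swap (Fin.castLE (Nat.sub_le n 1) i) ⟨(i : ℕ) + 1, by have := i.isLt; omega⟩)
    (hπp : ∀ i : Fin (n - 1), π (pG i) =
      Equiv.swap (Fin.castLE (Nat.sub_le n 1) i) ⟨(i : ℕ) + 1, by have := i.isLt; omega⟩) :
    ∃ φ : PresentedGroup (pvlRels n) →* VL n,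
      (∀ p : PairIdx n, φ (PresentedGroup.of p) =
        kappa n ((p.1.1 : ℕ) + 1) ((p.1.2 : ℕ) + 1)) ∧
      Function.Injective φ ∧ φ.range = π.ker := by
  have hker : ∀ x, π (phi n x) = 1 := by
    have hπ : SemidirectProduct.rightHom.comp (psi n) = π :=
      PresentedGroup.ext fun
        | Sum.inl i => by
          have h : psi n (yG i) = ⟨X (loF i) (hiF i), sw i⟩ := PresentedGroup.toGroup.of _
          exact (congrArg SemidirectProduct.rightHom h).trans (hπy i).symm
        | Sum.inr i => (congrArg SemidirectProduct.rightHom (psi_pG i)).trans (hπp i).symm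
    intro x
    rw [← hπ, MonoidHom.comp_apply, psi_phi, SemidirectProduct.rightHom_inl]
  refine ⟨phi n, fun p => ?_, fun x y hxy => ?_, le_antisymm ?_ fun g hg => ?_⟩
  · rw [← X_of, phi_X _ _ p.2.ne]
  · exact SemidirectProduct.inl_injective (φ := actHom n) (by rw [← psi_phi, ← psi_phi, hxy])
  · rintro _ ⟨x, rfl⟩
    exact hker x
  · obtain ⟨x, h, hh, rfl⟩ := exists_decomp g
    have h1 : π h = 1 := by
      have := MonoidHom.mem_ker.1 hg
      rwa [_root_.map_mul, hker, one_mul] at this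
    rw [pi_injOn_rhoSub π hπp (n - 1) (by omega) h hh h1, mul_one]
    exact ⟨x, rfl⟩
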